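/- arXiv:2401.09649 — 2 statements merged into one kernel-verified Lean document; each statement's English description precedes it below -/
import Mathlib

section
/- 𝔰_{1/2}^∞ ≤ non(ℰ): every subset of 2^ℕ that does not belong to the σ-ideal ℰ is, when viewed as a family of subsets of ℕ, a cofinally bisecting family; hence the least cardinality of a cofinally bisecting family is at most the least cardinality of a subset of 2^ℕ not in ℰ. -/
open MeasureTheory Filter Set

/-- `cnt X n` is the number of elements of `X` below `n`, i.e. `|X ∩ {0,…,n−1}|`. -/
noncomputable def cnt (X : Set ℕ) (n : ℕ) : ℕ := Nat.card ↥(X ∩ Set.Iio n)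

/-- `S` cofinally bisects `X`: for infinitely many `n`,
`|S ∩ X ∩ {0,…,n−1}| / |X ∩ {0,…,n−1}| = 1/2`. -/
def CofBisects (S X : Set ℕ) : Prop :=
  {n : ℕ | (cnt (S ∩ X) n : ℝ) / (cnt X n : ℝ) = 1 / 2}.Infinite

/-- Identify an element of Cantor space `2^ℕ` with a subset of `ℕ`. -/
def toSet (Y : ℕ → Bool) : Set ℕ := {i | Y i = true}

/-- `μ` is the uniform (1/2,1/2) product probability measure on Cantor space. -/
def IsCantorMeasure (μ : Measure (ℕ → Bool)) : Prop :=
  ∀ s : Finset ℕ, ∀ g : ℕ → Bool,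
    μ {Y : ℕ → Bool | ∀ i ∈ s, Y i = g i} = (1 / 2 : ENNReal) ^ s.card

/-- Membership in the σ-ideal `ℰ` generated by closed measure-zero subsets of `2^ℕ`. -/
def MemE (μ : Measure (ℕ → Bool)) (A : Set (ℕ → Bool)) : Prop :=
  ∃ F : ℕ → Set (ℕ → Bool), (∀ n, IsClosed (F n) ∧ μ (F n) = 0) ∧ A ⊆ ⋃ n, F n

/-- `𝔰_{1/2}^∞`: the least cardinality of a cofinally bisecting family
of infinite subsets of `ℕ`. -/
noncomputable def sHalfInf : Cardinal :=
  sInf {c : Cardinal | ∃ 𝒮 : Set (Set ℕ), (∀ S ∈ 𝒮, S.Infinite) ∧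
    (∀ X : Set ℕ, X.Infinite → ∃ S ∈ 𝒮, CofBisects S X) ∧ c = Cardinal.mk 𝒮}

/-- `non(ℰ)`: the least cardinality of a subset of `2^ℕ` not in `ℰ`. -/
noncomputable def nonE (μ : Measure (ℕ → Bool)) : Cardinal :=
  sInf {c : Cardinal | ∃ S : Set (ℕ → Bool), ¬ MemE μ S ∧ c = Cardinal.mk S}

/-!
Fix an infinite `X` and let a random `Y : ℕ → Bool` drive the walk which, at each time `i ∈ X`,
moves up if `Y i = true` and down otherwise. `Y` bisects `X` below `n` exactly when the walk is at
`0` at time `n`. The walk is a martingale with bounded increments which does not converge, so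
almost surely it is unbounded in both directions, and having steps of size at most one it returns
to `0` infinitely often. Hence the set of `Y` that cofinally bisect `X` is conull; it is also a
`Gδ` set, so its complement is a countable union of closed null sets, and a family outside `ℰ` has
to meet it.
-/

open ProbabilityTheory Topology Finset

section IntegerSequences

lemma exists_mem_Icc_eq_of_succ_le_add_one {w : ℕ → ℤ} (hw : ∀ n, w (n + 1) ≤ w n + 1)
    {k : ℤ} {m n : ℕ} (hmn : m ≤ n) (hm : w m ≤ k) (hn : k ≤ w n) :
    ∃ j ∈ Set.Icc m n, w j = k := by
  induction n, hmn using Nat.le_induction with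
  | base => exact ⟨m, Set.left_mem_Icc.2 le_rfl, le_antisymm hm hn⟩
  | succ n hmn ih =>
    rcases le_or_gt k (w n) with hk | hk
    · obtain ⟨j, hj, rfl⟩ := ih hk
      exact ⟨j, Set.Icc_subset_Icc_right n.le_succ hj, rfl⟩
    · exact ⟨n + 1, Set.right_mem_Icc.2 (by omega), by have := hw n; omega⟩

lemma frequently_lt_of_not_bddAbove_range {α : Type*} [LinearOrder α] {u : ℕ → α}
    (hu : ¬BddAbove (Set.range u)) (a : α) : ∃ᶠ n in atTop, a < u n := by
  refine fun hev ↦ hu (IsBoundedUnder.bddAbove_range ⟨a, ?_⟩)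
  simpa only [eventually_map, not_lt] using hev

lemma frequently_eq_of_not_bddAbove_of_not_bddBelow {w : ℕ → ℤ} (hw : ∀ n, w (n + 1) ≤ w n + 1)
    (habove : ¬BddAbove (Set.range w)) (hbelow : ¬BddBelow (Set.range w)) (k : ℤ) :
    ∃ᶠ n in atTop, w n = k := by
  refine frequently_atTop.2 fun N ↦ ?_
  obtain ⟨m, hNm, hm⟩ := frequently_atTop.1
    (frequently_lt_of_not_bddAbove_range (α := ℤᵒᵈ) (u := w) hbelow k) N
  obtain ⟨n, hmn, hn⟩ := frequently_atTop.1 (frequently_lt_of_not_bddAbove_range habove k) m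
  obtain ⟨j, hj, hjk⟩ := exists_mem_Icc_eq_of_succ_le_add_one hw hmn (le_of_lt hm) hn.le
  exact ⟨j, hNm.trans hj.1, hjk⟩

lemma not_tendsto_sum_range_of_frequently_ne_zero {x : ℕ → ℤ} (hx : ∃ᶠ i in atTop, x i ≠ 0)
    (c : ℝ) : ¬Tendsto (fun n ↦ ∑ i ∈ range n, (x i : ℝ)) atTop (𝓝 c) := by
  intro hc
  have hstep : Tendsto (fun n ↦ (x n : ℝ)) atTop (𝓝 0) := by
    simpa only [Function.comp_def, sum_range_succ_sub_sum, sub_self] using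
      (hc.comp (tendsto_add_atTop_nat 1)).sub hc
  have hsmall : ∀ᶠ n in atTop, |(x n : ℝ)| < 1 := by
    simpa using hstep.abs.eventually_lt_const (by simp : |(0 : ℝ)| < 1)
  refine hx (hsmall.mono fun n hn ↦ not_not.2 (Int.abs_lt_one_iff.1 ?_))
  exact_mod_cast hn

end IntegerSequences

section RandomWalk

variable {Ω : Type*} {mΩ : MeasurableSpace Ω} {μ : Measure Ω}

lemma martingale_sum_range_succ {E : Type*} [NormedAddCommGroup E] [NormedSpace ℝ E]
    [CompleteSpace E] [SecondCountableTopology E] [MeasurableSpace E] [BorelSpace E]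
    {ξ : ℕ → Ω → E} (hξ : ∀ i, StronglyMeasurable (ξ i)) (hindep : iIndepFun ξ μ)
    (hint : ∀ i, Integrable (ξ i) μ) (hmean : ∀ i, μ[ξ i] = 0) :
    Martingale (fun n ↦ ∑ i ∈ range (n + 1), ξ i) (Filtration.natural ξ hξ) μ := by
  have := hindep.isProbabilityMeasure
  refine martingale_of_condExp_sub_eq_zero_nat (fun n ↦ ?_) (fun n ↦ ?_) fun n ↦ ?_
  · exact Finset.stronglyMeasurable_sum _ fun i hi ↦
      (Filtration.stronglyAdapted_natural hξ i).mono
        ((Filtration.natural ξ hξ).mono (mem_range_succ_iff.1 hi))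
  · exact integrable_finsetSum' _ fun i _ ↦ hint i
  · simp only [sum_range_succ_sub_sum]
    filter_upwards [hindep.condExp_natural_ae_eq_of_lt hξ n.lt_succ_self] with ω hω
    rw [hω, hmean, Pi.zero_apply]

lemma ae_not_bddAbove_and_not_bddBelow_of_martingale [IsFiniteMeasure μ] {f : ℕ → Ω → ℝ}
    {ℱ : Filtration ℕ mΩ} {R : NNReal} (hf : Martingale f ℱ μ)
    (hbdd : ∀ᵐ ω ∂μ, ∀ i, |f (i + 1) ω - f i ω| ≤ R)
    (hdiv : ∀ᵐ ω ∂μ, ∀ c, ¬Tendsto (fun n ↦ f n ω) atTop (𝓝 c)) :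
    ∀ᵐ ω ∂μ, ¬BddAbove (Set.range fun n ↦ f n ω) ∧ ¬BddBelow (Set.range fun n ↦ f n ω) := by
  filter_upwards [hf.submartingale.bddAbove_iff_exists_tendsto hbdd,
    hf.bddAbove_range_iff_bddBelow_range hbdd, hdiv] with ω hconv hsymm hω
  rw [← hsymm, and_self, hconv, not_exists]
  exact hω

lemma ae_not_bddAbove_and_not_bddBelow_sum_range {ξ : ℕ → Ω → ℝ} {R : NNReal}
    (hξ : ∀ i, Measurable (ξ i)) (hindep : iIndepFun ξ μ) (hbdd : ∀ i ω, |ξ i ω| ≤ R)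
    (hmean : ∀ i, μ[ξ i] = 0)
    (hdiv : ∀ᵐ ω ∂μ, ∀ c, ¬Tendsto (fun n ↦ ∑ i ∈ range n, ξ i ω) atTop (𝓝 c)) :
    ∀ᵐ ω ∂μ, ¬BddAbove (Set.range fun n ↦ ∑ i ∈ range n, ξ i ω) ∧
      ¬BddBelow (Set.range fun n ↦ ∑ i ∈ range n, ξ i ω) := by
  have := hindep.isProbabilityMeasure
  have hmart := martingale_sum_range_succ (fun i ↦ (hξ i).stronglyMeasurable) hindep
    (fun i ↦ .of_bound (hξ i).aestronglyMeasurable R (ae_of_all _ (hbdd i))) hmean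
  have hunbdd := ae_not_bddAbove_and_not_bddBelow_of_martingale (R := R) hmart
    (ae_of_all _ fun ω n ↦ by
      rw [← Pi.sub_apply, sum_range_succ_sub_sum]
      exact hbdd _ _)
    (hdiv.mono fun ω hω c hc ↦
      hω c <| (tendsto_add_atTop_iff_nat 1).1 (by simpa only [Finset.sum_apply] using hc))
  filter_upwards [hunbdd] with ω ⟨habove, hbelow⟩
  simp only [Finset.sum_apply] at habove hbelow
  have hsub := Set.range_comp_subset_range Nat.succ fun n ↦ ∑ i ∈ range n, ξ i ω
  exact ⟨fun h ↦ habove (h.mono hsub), fun h ↦ hbelow (h.mono hsub)⟩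

lemma ae_frequently_sum_range_eq {ξ : ℕ → Ω → ℤ} (hξ : ∀ i, Measurable (ξ i))
    (hindep : iIndepFun ξ μ) (hbdd : ∀ i ω, |ξ i ω| ≤ 1) (hmean : ∀ i, ∫ ω, (ξ i ω : ℝ) ∂μ = 0)
    (hne : ∀ᵐ ω ∂μ, ∃ᶠ i in atTop, ξ i ω ≠ 0) (k : ℤ) :
    ∀ᵐ ω ∂μ, ∃ᶠ n in atTop, ∑ i ∈ range n, ξ i ω = k := by
  have hunbdd := ae_not_bddAbove_and_not_bddBelow_sum_range (ξ := fun i ω ↦ (ξ i ω : ℝ)) (R := 1)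
    (fun i ↦ measurable_from_top.comp (hξ i))
    (hindep.comp (fun _ ↦ Int.cast) fun _ ↦ measurable_from_top)
    (fun i ω ↦ by
      rw [NNReal.coe_one, ← Int.cast_abs]
      exact_mod_cast hbdd i ω)
    hmean (hne.mono fun ω ↦ not_tendsto_sum_range_of_frequently_ne_zero)
  filter_upwards [hunbdd] with ω ⟨habove, hbelow⟩
  have hcast : (fun n ↦ ∑ i ∈ range n, (ξ i ω : ℝ)) = Int.cast ∘ fun n ↦ ∑ i ∈ range n, ξ i ω := by
    ext n
    simp
  rw [hcast, Set.range_comp] at habove hbelow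
  refine frequently_eq_of_not_bddAbove_of_not_bddBelow (fun n ↦ ?_)
    (fun h ↦ habove (Int.cast_mono.map_bddAbove h))
    (fun h ↦ hbelow (Int.cast_mono.map_bddBelow h)) k
  simpa only [sum_range_succ, add_le_add_iff_left] using (abs_le.1 (hbdd n ω)).2

end RandomWalk

lemma eq_infinitePi_of_forall_cylinder {ι : Type*} {α : ι → Type*} [∀ i, MeasurableSpace (α i)]
    [∀ i, Countable (α i)] [∀ i, MeasurableSingletonClass (α i)]
    (ν : ∀ i, Measure (α i)) [∀ i, IsProbabilityMeasure (ν i)] {μ : Measure (∀ i, α i)}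
    (h : ∀ (s : Finset ι) (g : ∀ i, α i), μ {Y | ∀ i ∈ s, Y i = g i} = ∏ i ∈ s, ν i {g i}) :
    μ = Measure.infinitePi ν := by
  refine (Measure.isProjectiveLimit_infinitePi ν).unique (fun s ↦ ?_) |>.symm
  refine Measure.ext_of_singleton fun a ↦ ?_
  obtain ⟨g, rfl⟩ : ∃ g : ∀ i, α i, s.restrict g = a := by
    classical
    have := fun i ↦ nonempty_of_isProbabilityMeasure (ν i)
    exact ⟨fun i ↦ if hi : i ∈ s then a ⟨i, hi⟩ else Classical.arbitrary _, by ext i; simp⟩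
  have hpre : s.restrict ⁻¹' {s.restrict g} = {Y | ∀ i ∈ s, Y i = g i} := by
    ext Y
    simp [funext_iff]
  rw [Measure.map_apply (Finset.measurable_restrict s) (measurableSet_singleton _), hpre, h,
    Measure.pi_singleton]
  exact (prod_coe_sort s fun i ↦ ν i {g i}).symm

lemma uniformOn_univ_singleton {α : Type*} [Fintype α] [MeasurableSpace α]
    [MeasurableSingletonClass α] (a : α) :
    uniformOn Set.univ {a} = (Fintype.card α : ENNReal)⁻¹ := by
  rw [uniformOn_univ, Measure.count_singleton, one_div]

section CantorMeasure

variable {μ : Measure (ℕ → Bool)}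

lemma IsCantorMeasure.eq_infinitePi (hμ : IsCantorMeasure μ) :
    μ = Measure.infinitePi fun _ ↦ uniformOn Set.univ := by
  refine eq_infinitePi_of_forall_cylinder _ fun s g ↦ ?_
  simp only [hμ s g, uniformOn_univ_singleton, Fintype.card_bool, prod_const, one_div,
    Nat.cast_ofNat]

lemma IsCantorMeasure.isProbabilityMeasure (hμ : IsCantorMeasure μ) :
    IsProbabilityMeasure μ := by
  rw [hμ.eq_infinitePi]
  infer_instance

lemma IsCantorMeasure.iIndepFun_comp_eval (hμ : IsCantorMeasure μ)
    {β : Type*} [MeasurableSpace β] (f : ℕ → Bool → β) : iIndepFun (fun i Y ↦ f i (Y i)) μ := by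
  rw [hμ.eq_infinitePi]
  exact iIndepFun_infinitePi fun _ ↦ measurable_of_finite _

lemma IsCantorMeasure.measurePreserving_eval (hμ : IsCantorMeasure μ)
    (i : ℕ) : MeasurePreserving (Function.eval i) μ (uniformOn Set.univ) := by
  rw [hμ.eq_infinitePi]
  exact measurePreserving_eval_infinitePi _ i

end CantorMeasure

lemma isGδ_setOf_frequently_mem {α : Type*} [TopologicalSpace α] {U : ℕ → Set α}
    (hU : ∀ n, IsOpen (U n)) : IsGδ {x | ∃ᶠ n in atTop, x ∈ U n} := by
  have : {x | ∃ᶠ n in atTop, x ∈ U n} = ⋂ m, ⋃ n ≥ m, U n := by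
    ext x
    simp [frequently_atTop]
  rw [this]
  exact .iInter_of_isOpen fun m ↦ isOpen_biUnion fun n _ ↦ hU n

section IdealE

variable {μ : Measure (ℕ → Bool)} {A G : Set (ℕ → Bool)}

lemma MemE.measure_eq_zero (hA : MemE μ A) : μ A = 0 := by
  obtain ⟨F, hF, hAF⟩ := hA
  exact measure_mono_null hAF (measure_iUnion_null fun n ↦ (hF n).2)

lemma not_memE_univ [NeZero μ] : ¬MemE μ Set.univ := fun h ↦
  NeZero.ne μ (Measure.measure_univ_eq_zero.1 h.measure_eq_zero)

lemma memE_of_disjoint_isGδ (hG : IsGδ G) (hμG : ∀ᵐ Y ∂μ, Y ∈ G) (hAG : Disjoint A G) :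
    MemE μ A := by
  obtain ⟨U, hU, rfl⟩ := hG.eq_iInter_nat
  refine ⟨fun n ↦ (U n)ᶜ, fun n ↦ ⟨(hU n).isClosed_compl, ?_⟩, ?_⟩
  · exact mem_ae_iff.1 (hμG.mono fun Y hY ↦ Set.mem_iInter.1 hY n)
  · rw [← Set.compl_iInter]
    exact hAG.subset_compl_right

end IdealE

section Counting

variable {S X : Set ℕ}

lemma cnt_eq_count (X : Set ℕ) [DecidablePred (· ∈ X)] (n : ℕ) : cnt X n = n.count (· ∈ X) := by
  rw [cnt, Nat.count_eq_card_filter_range, Nat.card_coe_set_eq, ← Set.ncard_coe_finset]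
  congr 1
  ext i
  simp [and_comm]

lemma tendsto_cnt_atTop (hX : X.Infinite) : Tendsto (cnt X) atTop atTop := by
  classical
  rw [funext (cnt_eq_count X)]
  refine tendsto_atTop_atTop_of_monotone (Nat.count_monotone _) fun k ↦ ?_
  obtain ⟨n, hn⟩ := Nat.surjective_count_of_infinite_setOfPred (p := (· ∈ X)) hX k
  exact ⟨n, hn.ge⟩

lemma cnt_inter_le_ncard (hS : S.Finite) (X : Set ℕ) (n : ℕ) : cnt (S ∩ X) n ≤ S.ncard :=
  Set.ncard_le_ncard (Set.inter_subset_left.trans Set.inter_subset_left) hS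

lemma cofBisects_iff_frequently (hX : X.Infinite) :
    CofBisects S X ↔ ∃ᶠ n in atTop, 2 * cnt (S ∩ X) n = cnt X n := by
  rw [CofBisects, ← Nat.frequently_atTop_iff_infinite]
  refine frequently_congr ?_
  filter_upwards [(tendsto_cnt_atTop hX).eventually_ne_atTop 0] with n hn
  rw [div_eq_div_iff (Nat.cast_ne_zero.2 hn) two_ne_zero, one_mul, mul_comm]
  norm_cast

lemma CofBisects.infinite (hX : X.Infinite) (h : CofBisects S X) : S.Infinite := by
  intro hS
  obtain ⟨n, hn, hlt⟩ := ((cofBisects_iff_frequently hX).1 h).and_eventually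
    ((tendsto_cnt_atTop hX).eventually_gt_atTop (2 * S.ncard)) |>.exists
  have := cnt_inter_le_ncard hS X n
  omega

lemma sHalfInf_le_mk {𝒮 : Set (Set ℕ)} (h𝒮 : ∀ X : Set ℕ, X.Infinite → ∃ S ∈ 𝒮, CofBisects S X) :
    sHalfInf ≤ Cardinal.mk 𝒮 := by
  refine le_trans (csInf_le' ⟨{S ∈ 𝒮 | S.Infinite}, fun S hS ↦ hS.2, fun X hX ↦ ?_, rfl⟩)
    (Cardinal.mk_le_mk_of_subset (Set.sep_subset _ _))
  obtain ⟨S, hS, hSX⟩ := h𝒮 X hX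
  exact ⟨S, ⟨hS, hSX.infinite hX⟩, hSX⟩

end Counting

section CoinWalk

variable {μ : Measure (ℕ → Bool)} {X : Set ℕ}

open Classical in
/-- The step at time `i` of the walk on `ℤ` that moves only at times in `X`, up or down according
to the coin toss `b`. -/
noncomputable def coinStep (X : Set ℕ) (i : ℕ) (b : Bool) : ℤ :=
  if i ∈ X then (if b then 1 else -1) else 0

lemma abs_coinStep_le_one (X : Set ℕ) (i : ℕ) (b : Bool) : |coinStep X i b| ≤ 1 := by
  unfold coinStep
  split_ifs <;> simp

lemma coinStep_ne_zero {i : ℕ} (hi : i ∈ X) (b : Bool) : coinStep X i b ≠ 0 := by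
  cases b <;> simp [coinStep, hi]

lemma integral_coinStep_uniformOn (X : Set ℕ) (i : ℕ) :
    ∫ b, (coinStep X i b : ℝ) ∂uniformOn Set.univ = 0 := by
  rw [integral_fintype .of_finite]
  simp only [Measure.real, uniformOn_univ_singleton, Fintype.sum_bool]
  by_cases hi : i ∈ X <;> simp [coinStep, hi]

lemma sum_coinStep_eq (X : Set ℕ) (Y : ℕ → Bool) (n : ℕ) :
    ∑ i ∈ range n, coinStep X i (Y i) = 2 * (cnt (toSet Y ∩ X) n : ℤ) - cnt X n := by
  classical
  simp only [cnt_eq_count, Nat.count_eq_card_filter_range, card_filter, Nat.cast_sum, mul_sum,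
    ← sum_sub_distrib]
  refine sum_congr rfl fun i _ ↦ ?_
  by_cases hi : i ∈ X <;> cases hY : Y i <;> simp [coinStep, toSet, hi, hY]

lemma continuous_sum_coinStep (X : Set ℕ) (n : ℕ) :
    Continuous fun Y : ℕ → Bool ↦ ∑ i ∈ range n, coinStep X i (Y i) :=
  continuous_finsetSum _ fun i _ ↦
    (continuous_of_discreteTopology (f := coinStep X i)).comp (continuous_apply i)

lemma cofBisects_toSet_iff_frequently (hX : X.Infinite) (Y : ℕ → Bool) :
    CofBisects (toSet Y) X ↔ ∃ᶠ n in atTop, ∑ i ∈ range n, coinStep X i (Y i) = 0 := by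
  simp only [cofBisects_iff_frequently hX, sum_coinStep_eq, sub_eq_zero]
  norm_cast

lemma isGδ_setOf_cofBisects (hX : X.Infinite) :
    IsGδ {Y : ℕ → Bool | CofBisects (toSet Y) X} := by
  simp only [cofBisects_toSet_iff_frequently hX]
  exact isGδ_setOf_frequently_mem fun n ↦
    (isOpen_discrete {0}).preimage (continuous_sum_coinStep X n)

lemma IsCantorMeasure.integral_coinStep (hμ : IsCantorMeasure μ)
    (X : Set ℕ) (i : ℕ) : ∫ Y, (coinStep X i (Y i) : ℝ) ∂μ = 0 := by
  rw [← integral_coinStep_uniformOn X i, ← (hμ.measurePreserving_eval i).map_eq,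
    integral_map (measurable_pi_apply i).aemeasurable
      (measurable_of_finite _).aestronglyMeasurable]

lemma IsCantorMeasure.ae_cofBisects (hμ : IsCantorMeasure μ)
    (hX : X.Infinite) : ∀ᵐ Y ∂μ, CofBisects (toSet Y) X := by
  simp only [cofBisects_toSet_iff_frequently hX]
  exact ae_frequently_sum_range_eq
    (fun i ↦ (measurable_of_finite (coinStep X i)).comp (measurable_pi_apply i))
    (hμ.iIndepFun_comp_eval (coinStep X)) (fun i Y ↦ abs_coinStep_le_one X i (Y i))
    (hμ.integral_coinStep X)
    (ae_of_all _ fun Y ↦ (Nat.frequently_atTop_iff_infinite.2 hX).mono fun i hi ↦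
      coinStep_ne_zero hi (Y i)) 0

lemma IsCantorMeasure.exists_cofBisects_of_not_memE
    (hμ : IsCantorMeasure μ) {S : Set (ℕ → Bool)} (hS : ¬MemE μ S) (hX : X.Infinite) :
    ∃ Y ∈ S, CofBisects (toSet Y) X := by
  by_contra! hcon
  exact hS (memE_of_disjoint_isGδ (isGδ_setOf_cofBisects hX) (hμ.ae_cofBisects hX)
    (Set.disjoint_left.2 hcon))

end CoinWalk

/-- Every subset of `2^ℕ` not in `ℰ` is, viewed as a family of subsets of `ℕ`,
a cofinally bisecting family; hence `𝔰_{1/2}^∞ ≤ non(ℰ)`. -/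
theorem sHalfInf_le_nonE (μ : Measure (ℕ → Bool)) (hμ : IsCantorMeasure μ) :
    (∀ S : Set (ℕ → Bool), ¬ MemE μ S →
      ∀ X : Set ℕ, X.Infinite → ∃ Y ∈ S, CofBisects (toSet Y) X) ∧
    sHalfInf ≤ nonE μ := by
  have hbisect : ∀ S : Set (ℕ → Bool), ¬ MemE μ S →
      ∀ X : Set ℕ, X.Infinite → ∃ Y ∈ S, CofBisects (toSet Y) X :=
    fun _ hS _ hX ↦ hμ.exists_cofBisects_of_not_memE hS hX
  have := hμ.isProbabilityMeasure
  refine ⟨hbisect, le_csInf ⟨_, Set.univ, not_memE_univ, rfl⟩ ?_⟩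
  rintro _ ⟨S, hS, rfl⟩
  calc sHalfInf ≤ Cardinal.mk (toSet '' S) :=
        sHalfInf_le_mk fun X hX ↦ Set.exists_mem_image.2 (hbisect S hS X hX)
    _ ≤ Cardinal.mk S := Cardinal.mk_image_le
end

section
/- 𝔣𝔯 ≤ 𝔣𝔯_g ≤ 𝔯_{1/2}^∞: the least cardinality of a family of block sequences not all split by a single set is at most the least cardinality of such a family consisting of good block sequences, which in turn is at most the least cardinality of a cofinally 1/2-reaping family. -/
open Filter Set

/-- A block sequence: a sequence of nonempty finite subsets of `ℕ` with
`max (A n) < min (A (n+1))` for all `n`. -/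
def IsBlockSeq (A : ℕ → Finset ℕ) : Prop :=
  (∀ n, (A n).Nonempty) ∧ ∀ n, ∀ x ∈ A n, ∀ y ∈ A (n + 1), x < y

/-- A good block sequence: a block sequence whose sequence of block sizes is
given by a computable function. -/
def IsGoodBlockSeq (A : ℕ → Finset ℕ) : Prop :=
  IsBlockSeq A ∧ ∃ f : ℕ → ℕ, Computable f ∧ ∀ n, (A n).card = f n

/-- `B` splits a block sequence `A`: both `{n : A n ⊆ B}` and
`{n : A n ∩ B = ∅}` are infinite. -/
def SplitsBlocks (B : Set ℕ) (A : ℕ → Finset ℕ) : Prop :=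
  {n : ℕ | ∀ x ∈ A n, x ∈ B}.Infinite ∧ {n : ℕ | ∀ x ∈ A n, x ∉ B}.Infinite

/-- `𝔯_{1/2}^∞`: the least cardinality of a cofinally 1/2-reaping family. -/
noncomputable def rHalfInf : Cardinal :=
  sInf {c : Cardinal | ∃ ℛ : Set (Set ℕ), (∀ R ∈ ℛ, R.Infinite) ∧
    (¬ ∃ X : Set ℕ, X.Infinite ∧ ∀ R ∈ ℛ, CofBisects X R) ∧ c = Cardinal.mk ℛ}

/-- `𝔣𝔯`: the least cardinality of a family of block sequences such that no
single `B ⊆ ℕ` splits all of its members. -/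
noncomputable def fr : Cardinal :=
  sInf {c : Cardinal | ∃ ℱ : Set (ℕ → Finset ℕ), (∀ A ∈ ℱ, IsBlockSeq A) ∧
    (¬ ∃ B : Set ℕ, ∀ A ∈ ℱ, SplitsBlocks B A) ∧ c = Cardinal.mk ℱ}

/-- `𝔣𝔯_g`: the least cardinality of a family of good block sequences such that
no single `B ⊆ ℕ` splits all of its members. -/
noncomputable def frg : Cardinal :=
  sInf {c : Cardinal | ∃ ℱ : Set (ℕ → Finset ℕ), (∀ A ∈ ℱ, IsGoodBlockSeq A) ∧
    (¬ ∃ B : Set ℕ, ∀ A ∈ ℱ, SplitsBlocks B A) ∧ c = Cardinal.mk ℱ}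

/-!
Enumerate an infinite set `R` increasingly by `e` and cut `e` into the images of the dyadic
intervals `[2ⁿ, 2ⁿ⁺¹)`. Such a block makes up at least half of the part of `R` enumerated up to its
end, so a set `B` containing it has relative density at least `1/2` in that part, and a set `B`
missing it at most `1/2`. If `B` splits this block sequence, both happen infinitely often. Between
a stage of the first kind and a later one of the second kind, the monotone function
`k ↦ 2 * |B ∩ {e 0, …, e (k - 1)}|` has a fixed point, and there `B` bisects `R` exactly.
-/

theorem exists_isFixedPt_mem_Icc_of_monotone {α : Type*} [ConditionallyCompleteLattice α]
    {f : α → α} (hf : Monotone f) {a b : α} (hab : a ≤ b) (ha : a ≤ f a) (hb : f b ≤ b) :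
    ∃ c ∈ Icc a b, Function.IsFixedPt f c := by
  set s : Set α := {x | x ∈ Icc a b ∧ x ≤ f x}
  have has : a ∈ s := ⟨left_mem_Icc.2 hab, ha⟩
  have hs : BddAbove s := ⟨b, fun x hx => hx.1.2⟩
  have hac : a ≤ sSup s := le_csSup hs has
  have hcb : sSup s ≤ b := csSup_le ⟨a, has⟩ fun x hx => hx.1.2
  have hcf : sSup s ≤ f (sSup s) :=
    csSup_le ⟨a, has⟩ fun x hx => hx.2.trans (hf (le_csSup hs hx))
  have hfs : f (sSup s) ∈ s := ⟨⟨hac.trans hcf, (hf hcb).trans hb⟩, hf hcf⟩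
  exact ⟨sSup s, ⟨hac, hcb⟩, (le_csSup hs hfs).antisymm hcf⟩

theorem exists_strictMono_range_eq {X : Set ℕ} (hX : X.Infinite) :
    ∃ e : ℕ → ℕ, StrictMono e ∧ range e = X :=
  ⟨Nat.nth (· ∈ X), Nat.nth_strictMono hX, Nat.range_nth_of_infinite hX⟩

theorem primrec_const_pow (b : ℕ) : Primrec (b ^ · : ℕ → ℕ) :=
  (Primrec₂.unpaired'.1 Nat.Primrec.pow).comp (.const b) .id

section Counting

variable {S : Set ℕ} {a b : ℕ}

theorem cnt_eq_ncard (X : Set ℕ) (n : ℕ) : cnt X n = (X ∩ Iio n).ncard :=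
  Nat.card_coe_set_eq _

theorem cnt_mono (X : Set ℕ) : Monotone (cnt X) := fun m n hmn => by
  rw [cnt_eq_ncard, cnt_eq_ncard]
  exact ncard_le_ncard (inter_subset_inter_right X (Iio_subset_Iio hmn))
    ((finite_Iio n).inter_of_right X)

theorem cnt_univ (n : ℕ) : cnt univ n = n := by
  rw [cnt_eq_ncard, univ_inter, ncard_Iio_nat]

theorem cnt_inter_range_apply {e : ℕ → ℕ} (he : StrictMono e) (S : Set ℕ) (k : ℕ) :
    cnt (S ∩ range e) (e k) = cnt (e ⁻¹' S) k := by
  have himage : e '' (e ⁻¹' S ∩ Iio k) = S ∩ range e ∩ Iio (e k) := by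
    rw [inter_right_comm, ← image_preimage_eq_inter_range, preimage_inter]
    congr! 2
    exact ext fun i => he.lt_iff_lt.symm
  rw [cnt_eq_ncard, cnt_eq_ncard, ← himage, ncard_image_of_injective _ he.injective]

theorem cnt_range_apply {e : ℕ → ℕ} (he : StrictMono e) (k : ℕ) : cnt (range e) (e k) = k := by
  simpa only [univ_inter, preimage_univ, cnt_univ] using cnt_inter_range_apply he univ k

theorem sub_le_cnt_of_Ico_subset (h : Ico a b ⊆ S) : b - a ≤ cnt S b := by
  rw [cnt_eq_ncard, ← ncard_Ico_nat]
  exact ncard_le_ncard (subset_inter h Ico_subset_Iio_self) ((finite_Iio b).inter_of_right S)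

theorem cnt_le_of_disjoint_Ico (h : Disjoint (Ico a b) S) : cnt S b ≤ a := by
  rw [cnt_eq_ncard]
  calc (S ∩ Iio b).ncard
      ≤ (Iio a).ncard := ncard_le_ncard fun i hi =>
        lt_of_not_ge fun hai => disjoint_left.1 h ⟨hai, hi.2⟩ hi.1
    _ = a := ncard_Iio_nat a

end Counting

section Bisecting

variable {S : Set ℕ}

theorem not_cofBisects_self (X : Set ℕ) : ¬ CofBisects X X := fun h => by
  obtain ⟨n, hn⟩ := h.nonempty
  rw [mem_ofPred_eq, inter_self] at hn
  rcases eq_or_ne (cnt X n : ℝ) 0 with h0 | h0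
  · norm_num [h0] at hn
  · norm_num [div_self h0] at hn

theorem cofBisects_univ_iff : CofBisects S univ ↔ ∃ᶠ k in atTop, 2 * cnt S k = k := by
  rw [CofBisects, ← Nat.frequently_atTop_iff_infinite]
  refine frequently_congr ((eventually_ne_atTop 0).mono fun k hk => ?_)
  rw [inter_univ, cnt_univ, div_eq_div_iff (Nat.cast_ne_zero.2 hk) two_ne_zero, one_mul, mul_comm]
  norm_cast

theorem cofBisects_univ_of_frequently (hge : ∃ᶠ k in atTop, k ≤ 2 * cnt S k)
    (hle : ∃ᶠ k in atTop, 2 * cnt S k ≤ k) : CofBisects S univ := by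
  refine cofBisects_univ_iff.2 (frequently_atTop.2 fun N => ?_)
  obtain ⟨a, hNa, ha⟩ := frequently_atTop.1 hge N
  obtain ⟨b, hab, hb⟩ := frequently_atTop.1 hle a
  obtain ⟨k, hk, hfix⟩ :=
    exists_isFixedPt_mem_Icc_of_monotone ((cnt_mono S).const_mul' 2) hab ha hb
  exact ⟨k, hNa.trans hk.1, hfix⟩

theorem CofBisects.of_preimage {e : ℕ → ℕ} (he : StrictMono e)
    (h : CofBisects (e ⁻¹' S) univ) : CofBisects S (range e) := by
  refine (h.image he.injective.injOn).mono (image_subset_iff.2 fun k hk => ?_)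
  rw [mem_ofPred_eq, inter_univ, cnt_univ] at hk
  rwa [mem_preimage, mem_ofPred_eq, cnt_inter_range_apply he, cnt_range_apply he]

end Bisecting

section Blocks

variable {A : ℕ → Finset ℕ} {B : Set ℕ} {e : ℕ → ℕ}

theorem splitsBlocks_compl_iff : SplitsBlocks Bᶜ A ↔ SplitsBlocks B A := by
  simp only [SplitsBlocks, mem_compl_iff, not_not, and_comm]

theorem splitsBlocks_image_iff :
    SplitsBlocks B (fun n => (A n).image e) ↔ SplitsBlocks (e ⁻¹' B) A := by
  simp only [SplitsBlocks, Finset.forall_mem_image, mem_preimage]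

theorem SplitsBlocks.infinite (h : SplitsBlocks B A) (hA : IsBlockSeq A) : B.Infinite := by
  choose x hx using hA.1
  have hmono : StrictMono x :=
    strictMono_nat_of_lt_succ fun n => hA.2 n _ (hx n) _ (hx (n + 1))
  refine (h.1.image hmono.injective.injOn).mono ?_
  rintro _ ⟨n, hn, rfl⟩
  exact hn (x n) (hx n)

theorem IsBlockSeq.not_splitsBlocks_univ (hA : IsBlockSeq A) : ¬ SplitsBlocks univ A := fun h =>
  (splitsBlocks_compl_iff.2 h).infinite hA (compl_univ ▸ finite_empty)

theorem IsBlockSeq.image (hA : IsBlockSeq A) (he : StrictMono e) :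
    IsBlockSeq fun n => (A n).image e := by
  refine ⟨fun n => (hA.1 n).image e, fun n => ?_⟩
  simp only [Finset.forall_mem_image, he.lt_iff_lt]
  exact hA.2 n

theorem IsGoodBlockSeq.image (hA : IsGoodBlockSeq A) (he : StrictMono e) :
    IsGoodBlockSeq fun n => (A n).image e := by
  obtain ⟨hblock, f, hf, hcard⟩ := hA
  exact ⟨hblock.image he, f, hf, fun n =>
    (Finset.card_image_of_injective _ he.injective).trans (hcard n)⟩

theorem cofBisects_univ_of_splitsBlocks_Ico {a b : ℕ → ℕ} (hab : ∀ n, 2 * a n ≤ b n)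
    (hb : Tendsto b atTop atTop) (h : SplitsBlocks B fun n => Finset.Ico (a n) (b n)) :
    CofBisects B univ := by
  have hinside : ∃ᶠ n in atTop, b n ≤ 2 * cnt B (b n) :=
    (Nat.frequently_atTop_iff_infinite.2 h.1).mono fun n hn => by
      have := sub_le_cnt_of_Ico_subset fun i hi => hn i (Finset.mem_Ico.2 hi)
      have := hab n
      omega
  have houtside : ∃ᶠ n in atTop, 2 * cnt B (b n) ≤ b n :=
    (Nat.frequently_atTop_iff_infinite.2 h.2).mono fun n hn => by
      have := cnt_le_of_disjoint_Ico (disjoint_left.2 fun i hi => hn i (Finset.mem_Ico.2 hi))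
      have := hab n
      omega
  exact cofBisects_univ_of_frequently (hb.frequently hinside) (hb.frequently houtside)

end Blocks

section DyadicBlocks

/-- The dyadic intervals `[2ⁿ, 2ⁿ⁺¹)`, the model block sequence; the one attached to an infinite
set is its image under the increasing enumeration of that set. Leaving out the index `0` keeps the
endpoints free of truncated subtraction. -/
def dyadicBlock (n : ℕ) : Finset ℕ := Finset.Ico (2 ^ n) (2 ^ (n + 1))

theorem isGoodBlockSeq_dyadicBlock : IsGoodBlockSeq dyadicBlock := by
  refine ⟨⟨fun n => ?_, fun n x hx y hy => ?_⟩, (2 ^ ·), (primrec_const_pow 2).to_comp, fun n => ?_⟩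
  · exact Finset.nonempty_Ico.2 (Nat.pow_lt_pow_succ one_lt_two)
  · exact (Finset.mem_Ico.1 hx).2.trans_le (Finset.mem_Ico.1 hy).1
  · rw [dyadicBlock, Nat.card_Ico, pow_succ, mul_two, Nat.add_sub_cancel]

theorem cofBisects_range_of_splitsBlocks {B : Set ℕ} {e : ℕ → ℕ} (he : StrictMono e)
    (h : SplitsBlocks B fun n => (dyadicBlock n).image e) : CofBisects B (range e) := by
  have htendsto : Tendsto (fun n => 2 ^ (n + 1)) atTop (atTop : Filter ℕ) :=
    (tendsto_pow_atTop_atTop_of_one_lt one_lt_two).comp (tendsto_add_atTop_nat 1)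
  exact .of_preimage he <| cofBisects_univ_of_splitsBlocks_Ico (fun n => (pow_succ' 2 n).ge)
    htendsto (splitsBlocks_image_iff.1 h)

theorem exists_isGoodBlockSeq_not_splitsBlocks (B : Set ℕ) :
    ∃ A, IsGoodBlockSeq A ∧ ¬ SplitsBlocks B A := by
  wlog hB : B.Infinite generalizing B
  · simpa only [splitsBlocks_compl_iff] using this Bᶜ (not_infinite.1 hB).infinite_compl
  obtain ⟨e, he, rfl⟩ := exists_strictMono_range_eq hB
  refine ⟨_, isGoodBlockSeq_dyadicBlock.image he, ?_⟩
  rw [splitsBlocks_image_iff, preimage_range]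
  exact isGoodBlockSeq_dyadicBlock.1.not_splitsBlocks_univ

end DyadicBlocks

theorem fr_le_frg : fr ≤ frg := by
  refine csInf_le_csInf' ⟨_, {A | IsGoodBlockSeq A}, fun A hA => hA, ?_, rfl⟩ ?_
  · rintro ⟨B, hB⟩
    obtain ⟨A, hA, hBA⟩ := exists_isGoodBlockSeq_not_splitsBlocks B
    exact hBA (hB A hA)
  · rintro c ⟨ℱ, hgood, hunsplit, rfl⟩
    exact ⟨ℱ, fun A hA => (hgood A hA).1, hunsplit, rfl⟩

theorem frg_le_mk {ℱ : Set (ℕ → Finset ℕ)} (hgood : ∀ A ∈ ℱ, IsGoodBlockSeq A)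
    (hunsplit : ¬ ∃ B, ∀ A ∈ ℱ, SplitsBlocks B A) : frg ≤ Cardinal.mk ℱ :=
  csInf_le' ⟨ℱ, hgood, hunsplit, rfl⟩

theorem frg_le_rHalfInf : frg ≤ rHalfInf := by
  refine le_csInf ⟨_, {R | R.Infinite}, fun R hR => hR, ?_, rfl⟩ ?_
  · rintro ⟨X, hX, hbisects⟩
    exact not_cofBisects_self X (hbisects X hX)
  rintro c ⟨ℛ, hinf, hreaping, rfl⟩
  choose! e he hrange using fun R hR => exists_strictMono_range_eq (hinf R hR)
  let blocks (R : Set ℕ) (n : ℕ) : Finset ℕ := (dyadicBlock n).image (e R)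
  have hgood (R) (hR : R ∈ ℛ) : IsGoodBlockSeq (blocks R) :=
    isGoodBlockSeq_dyadicBlock.image (he R hR)
  suffices hunsplit : ¬ ∃ B, ∀ A ∈ blocks '' ℛ, SplitsBlocks B A from
    (frg_le_mk (forall_mem_image.2 hgood) hunsplit).trans Cardinal.mk_image_le
  rintro ⟨B, hB⟩
  have hsplits (R) (hR : R ∈ ℛ) : SplitsBlocks B (blocks R) := hB _ (mem_image_of_mem blocks hR)
  have hbisects (R) (hR : R ∈ ℛ) : CofBisects B R :=
    hrange R hR ▸ cofBisects_range_of_splitsBlocks (he R hR) (hsplits R hR)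
  rcases ℛ.eq_empty_or_nonempty with rfl | ⟨R, hR⟩
  · exact hreaping ⟨univ, infinite_univ, fun R hR => hR.elim⟩
  · exact hreaping ⟨B, (hsplits R hR).infinite (hgood R hR).1, hbisects⟩

/-- `𝔣𝔯 ≤ 𝔣𝔯_g ≤ 𝔯_{1/2}^∞`. -/
theorem fr_le_frg_le_rHalfInf : fr ≤ frg ∧ frg ≤ rHalfInf :=
  ⟨fr_le_frg, frg_le_rHalfInf⟩
end
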